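/- For A and B subsets of S = ∏_{i=1}^n S_i with each S_i finite, and P = ∏ P_i a product probability measure on S, the probability of the set A □ B (consisting of all x ∈ S for which there exist disjoint subsets K, L of {1,...,n} with [x]_K ⊆ A and [x]_L ⊆ B) satisfies P(A □ B) ≤ P(A)P(B). -/

import Mathlib

open MeasureTheory

/-- `cylinder x K` is the set of points agreeing with `x` on the coordinates in `K`. -/
def cylinder {n : ℕ} {S : Fin n → Type*} (x : ∀ i, S i) (K : Finset (Fin n)) :
    Set (∀ i, S i) :=
  {y | ∀ i ∈ K, y i = x i}

/-- The van den Berg–Kesten box operation. -/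
def boxOp {n : ℕ} {S : Fin n → Type*} (A B : Set (∀ i, S i)) : Set (∀ i, S i) :=
  {x | ∃ K L : Finset (Fin n), Disjoint K L ∧ cylinder x K ⊆ A ∧ cylinder x L ⊆ B}

namespace BKRProof

open Finset

variable {n : ℕ}

/-- The red vector of a butterfly with body `x` and index set `K`. -/
def U (x : Fin n → Bool) (K : Finset (Fin n)) (a : Fin n → Bool) : ℤ :=
  ∏ i, (if a i = x i then 1 else if i ∈ K then 0 else 2)

/-- The positive definite kernel. -/
def T (a b : Fin n → Bool) : ℤ := ∏ i, (if a i = b i then 2 else -1)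

/-- One-coordinate square decomposition of the kernel. -/
def d (k : Option Bool) (a : Bool) : ℤ :=
  match k with
  | none => if a then 1 else -1
  | some c => if a = c then 1 else 0

def D (k : Fin n → Option Bool) (a : Fin n → Bool) : ℤ := ∏ i, d (k i) (a i)

lemma T_eq (a b : Fin n → Bool) : T a b = ∑ k : Fin n → Option Bool, D k a * D k b := by
  have h1 : ∀ u v : Bool, (if u = v then (2 : ℤ) else -1) = ∑ k : Option Bool, d k u * d k v := by
    decide
  unfold T D
  simp_rw [h1, ← Finset.prod_mul_distrib]
  rw [Finset.prod_univ_sum, Fintype.piFinset_univ]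

lemma D_some (c a : Fin n → Bool) : D (fun i => some (c i)) a = if a = c then 1 else 0 := by
  unfold D d
  split_ifs with h
  · subst h; simp
  · obtain ⟨i, hi⟩ := Function.ne_iff.1 h
    exact Finset.prod_eq_zero (mem_univ i) (by simp [hi])

lemma U_supp {x a : Fin n → Bool} {K : Finset (Fin n)} (h : U x K a ≠ 0) :
    ∀ i ∈ K, a i = x i := by
  intro i hi
  by_contra hne
  exact h (Finset.prod_eq_zero (mem_univ i) (by simp [hne, hi]))

lemma V_supp {x a : Fin n → Bool} {K : Finset (Fin n)} (h : ∑ b, T a b * U x K b ≠ 0) :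
    ∀ i ∉ K, (!a i) = x i := by
  intro i hi
  by_contra hne
  apply h
  unfold T U
  simp_rw [← Finset.prod_mul_distrib]
  have := Finset.prod_univ_sum (fun _ : Fin n => (univ : Finset Bool))
    (fun i b => (if a i = b then (2 : ℤ) else -1) *
      (if b = x i then 1 else if i ∈ K then 0 else 2))
  rw [Fintype.piFinset_univ] at this
  rw [← this]
  refine Finset.prod_eq_zero (mem_univ i) ?_
  simp only [hi, if_false]
  revert hne
  generalize a i = u
  generalize x i = v
  revert u v
  decide

lemma U_mod (x a : Fin n → Bool) (K : Finset (Fin n)) :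
    ((U x K a : ℤ) : ZMod 2) = if x = a then 1 else 0 := by
  unfold U
  push_cast
  split_ifs with h
  · subst h; simp
  · obtain ⟨i, hi⟩ := Function.ne_iff.1 h
    refine Finset.prod_eq_zero (mem_univ i) ?_
    rw [if_neg (fun h => hi h.symm)]
    split_ifs
    · rfl
    · rfl

lemma U_indep (K : (Fin n → Bool) → Finset (Fin n)) :
    LinearIndependent ℚ (fun x : Fin n → Bool => fun a : Fin n → Bool => (U x (K x) a : ℚ)) := by
  let M : Matrix (Fin n → Bool) (Fin n → Bool) ℤ := Matrix.of fun x a => U x (K x) a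
  have h2 : ((M.det : ℤ) : ZMod 2) = 1 := by
    have h3 := RingHom.map_det (Int.castRingHom (ZMod 2)) M
    have h4 : (Int.castRingHom (ZMod 2)).mapMatrix M = 1 := by
      ext x a
      simp [M, U_mod, Matrix.one_apply]
    rw [h4, Matrix.det_one] at h3
    simpa using h3
  have h5 : M.det ≠ 0 := by
    intro h
    rw [h] at h2
    simp at h2
  have h6 : ((Int.castRingHom ℚ).mapMatrix M).det ≠ 0 := by
    rw [← RingHom.map_det]
    simpa using h5
  exact Matrix.linearIndependent_rows_of_det_ne_zero h6

/-- Reimer's butterfly theorem. -/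
lemma butterfly (A B : Set (Fin n → Bool)) (X C : Finset (Fin n → Bool))
    (K : (Fin n → Bool) → Finset (Fin n))
    (hA : ∀ x ∈ X, ∀ y, (∀ i ∈ K x, y i = x i) → y ∈ A)
    (hB : ∀ x ∈ X, ∀ y, (∀ i ∉ K x, y i = x i) → y ∈ B)
    (hC : ∀ z, z ∈ A → (fun i => !z i) ∈ B → z ∈ C) : X.card ≤ C.card := by
  have key : LinearIndependent ℚ (fun x : X => fun z : C => (U x.1 (K x.1) z.1 : ℚ)) := by
    rw [Fintype.linearIndependent_iff]
    intro c hc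
    have hX : LinearIndependent ℚ
        (fun x : X => fun a : Fin n → Bool => (U x.1 (K x.1) a : ℚ)) :=
      (U_indep K).comp (fun x : X => x.1) Subtype.val_injective
    rw [Fintype.linearIndependent_iff] at hX
    apply hX c
    set w : (Fin n → Bool) → ℚ := ∑ x : X, c x • fun a => (U x.1 (K x.1) a : ℚ) with hw
    have hwa : ∀ a, w a = ∑ x : X, c x * (U x.1 (K x.1) a : ℚ) := by
      intro a; simp [hw]
    have hwC : ∀ a ∈ C, w a = 0 := by
      intro a ha
      have := congrFun hc ⟨a, ha⟩
      rw [hwa]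
      simpa using this
    have hwA : ∀ a, w a ≠ 0 → a ∈ A := by
      intro a ha
      rw [hwa] at ha
      obtain ⟨x, -, hx⟩ := Finset.exists_ne_zero_of_sum_ne_zero ha
      have hx' : U x.1 (K x.1) a ≠ 0 := by
        intro h; simp [h] at hx
      exact hA x.1 x.2 a (U_supp hx')
    have hV : ∀ x : X, ∑ a, w a * ∑ b, (T a b : ℚ) * (U x.1 (K x.1) b : ℚ) = 0 := by
      intro x
      refine Finset.sum_eq_zero fun a _ => ?_
      by_contra hne
      have h1 := left_ne_zero_of_mul hne
      have h2 := right_ne_zero_of_mul hne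
      have h3 : ∑ b, T a b * U x.1 (K x.1) b ≠ 0 := by
        intro h
        apply h2
        exact_mod_cast h
      exact h1 (hwC a (hC a (hwA a h1) (hB x.1 x.2 _ (V_supp h3))))
    have hQ : ∑ a, ∑ b, w a * (T a b : ℚ) * w b = 0 := by
      have : ∑ x : X, c x * ∑ a, w a * ∑ b, (T a b : ℚ) * (U x.1 (K x.1) b : ℚ) = 0 := by
        simp [hV]
      rw [← this]
      symm
      simp_rw [Finset.mul_sum]
      rw [Finset.sum_comm]
      refine Finset.sum_congr rfl fun a _ => ?_
      rw [Finset.sum_comm]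
      refine Finset.sum_congr rfl fun b _ => ?_
      rw [hwa b, Finset.mul_sum]
      refine Finset.sum_congr rfl fun x _ => ?_
      ring
    have hS : ∑ k : Fin n → Option Bool, (∑ a, (D k a : ℚ) * w a) ^ 2 = 0 := by
      rw [← hQ]
      simp_rw [T_eq, sq, Finset.sum_mul_sum]
      push_cast
      simp_rw [Finset.mul_sum, Finset.sum_mul]
      rw [Finset.sum_comm]
      refine Finset.sum_congr rfl fun a _ => ?_
      rw [Finset.sum_comm]
      refine Finset.sum_congr rfl fun b _ => ?_
      refine Finset.sum_congr rfl fun k _ => ?_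
      ring
    rw [Finset.sum_eq_zero_iff_of_nonneg (fun _ _ => sq_nonneg _)] at hS
    funext z
    have := hS (fun i => some (z i)) (mem_univ _)
    simpa [D_some] using this
  have := key.fintype_card_le_finrank
  simpa using this

/-- Reimer's theorem on the cube: `|A □ B| ≤ |A ∩ flip B|`. -/
lemma cube (A B : Set (Fin n → Bool)) (X C : Finset (Fin n → Bool))
    (hX : ∀ x ∈ X, x ∈ boxOp A B)
    (hC : ∀ z, z ∈ A → (fun i => !z i) ∈ B → z ∈ C) : X.card ≤ C.card := by
  have : ∀ x : Fin n → Bool, ∃ K : Finset (Fin n), x ∈ X →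
      (∀ y, (∀ i ∈ K, y i = x i) → y ∈ A) ∧ (∀ y, (∀ i ∉ K, y i = x i) → y ∈ B) := by
    intro x
    by_cases hx : x ∈ X
    · obtain ⟨K, L, hd, hA, hB⟩ := hX x hx
      refine ⟨K, fun _ => ⟨fun y hy => hA hy, fun y hy => hB ?_⟩⟩
      intro i hi
      exact hy i (Finset.disjoint_right.1 hd hi)
    · exact ⟨∅, fun h => absurd h hx⟩
  choose K hK using this
  exact butterfly A B X C K (fun x hx => (hK x hx).1) (fun x hx => (hK x hx).2) hC

variable {S : Fin n → Type*}

/-- mix two configurations. -/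
def mix (σ : Fin n → Bool) (p : (∀ i, S i) × (∀ i, S i)) : ∀ i, S i :=
  fun i => if σ i then p.2 i else p.1 i

/-- The coordinate swap. -/
def swp (σ : Fin n → Bool) : ((∀ i, S i) × (∀ i, S i)) ≃ ((∀ i, S i) × (∀ i, S i)) where
  toFun p := (mix σ p, mix (fun i => !σ i) p)
  invFun p := (mix σ p, mix (fun i => !σ i) p)
  left_inv p := by
    ext i <;> cases h : σ i <;> simp [mix, h]
  right_inv p := by
    ext i <;> cases h : σ i <;> simp [mix, h]

open Classical in
lemma orbit_ineq (A B : Set (∀ i, S i)) (p : (∀ i, S i) × (∀ i, S i)) :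
    ∑ σ : Fin n → Bool, (if mix σ p ∈ boxOp A B then (1 : ENNReal) else 0) ≤
    ∑ σ : Fin n → Bool, (if mix σ p ∈ A ∧ mix (fun i => !σ i) p ∈ B then 1 else 0) := by
  rw [Finset.sum_boole, Finset.sum_boole]
  norm_cast
  refine cube {σ | mix σ p ∈ A} {σ | mix σ p ∈ B} _ _ ?_ ?_
  · intro σ hσ
    obtain ⟨K, L, hd, hA, hB⟩ := (Finset.mem_filter.1 hσ).2
    refine ⟨K, L, hd, fun τ hτ => hA ?_, fun τ hτ => hB ?_⟩
    · intro i hi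
      simp [mix, hτ i hi]
    · intro i hi
      simp [mix, hτ i hi]
  · intro z h1 h2
    exact Finset.mem_filter.2 ⟨mem_univ _, h1, h2⟩

open Classical in
lemma sum_swap [∀ i, Fintype (S i)] (w : ∀ i, S i → ENNReal) (σ : Fin n → Bool)
    (f : ((∀ i, S i) × (∀ i, S i)) → ENNReal) :
    ∑ p : (∀ i, S i) × (∀ i, S i), (∏ i, w i (p.1 i)) * (∏ i, w i (p.2 i)) * f (swp σ p) =
    ∑ p : (∀ i, S i) × (∀ i, S i), (∏ i, w i (p.1 i)) * (∏ i, w i (p.2 i)) * f p := by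
  refine Fintype.sum_equiv (swp σ) _ _ fun p => ?_
  congr 1
  rw [← Finset.prod_mul_distrib, ← Finset.prod_mul_distrib]
  refine Finset.prod_congr rfl fun i _ => ?_
  cases h : σ i <;> simp [swp, mix, h, mul_comm]

open Classical in
lemma weighted [∀ i, Fintype (S i)] (w : ∀ i, S i → ENNReal) (A B : Set (∀ i, S i)) :
    ∑ p : (∀ i, S i) × (∀ i, S i), (∏ i, w i (p.1 i)) * (∏ i, w i (p.2 i)) *
      (if p.1 ∈ boxOp A B then 1 else 0) ≤
    ∑ p : (∀ i, S i) × (∀ i, S i), (∏ i, w i (p.1 i)) * (∏ i, w i (p.2 i)) *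
      (if p.1 ∈ A ∧ p.2 ∈ B then 1 else 0) := by
  set N : ENNReal := (Fintype.card (Fin n → Bool) : ENNReal) with hN
  have hN0 : N ≠ 0 := by
    rw [hN]; exact_mod_cast Fintype.card_ne_zero
  have hNt : N ≠ ⊤ := ENNReal.natCast_ne_top _
  have avg : ∀ f : ((∀ i, S i) × (∀ i, S i)) → ENNReal,
      N * ∑ p : (∀ i, S i) × (∀ i, S i), (∏ i, w i (p.1 i)) * (∏ i, w i (p.2 i)) * f p =
      ∑ p : (∀ i, S i) × (∀ i, S i), (∏ i, w i (p.1 i)) * (∏ i, w i (p.2 i)) *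
        ∑ σ : Fin n → Bool, f (swp σ p) := by
    intro f
    simp_rw [Finset.mul_sum (s := (univ : Finset (Fin n → Bool)))]
    rw [Finset.sum_comm]
    simp_rw [sum_swap w _ f]
    rw [Finset.sum_const, nsmul_eq_mul, hN, Finset.card_univ]
  rw [← ENNReal.mul_le_mul_iff_right hN0 hNt, avg, avg]
  refine Finset.sum_le_sum fun p _ => ?_
  exact mul_le_mul_right (orbit_ineq A B p) _

end BKRProof

/-- The van den Berg–Kesten–Reimer inequality: for a product probability measure on a
finite product of finite sets, `P(A □ B) ≤ P(A) P(B)`. -/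
theorem bkr_inequality {n : ℕ} {S : Fin n → Type*} [∀ i, Fintype (S i)]
    [∀ i, MeasurableSpace (S i)] [∀ i, MeasurableSingletonClass (S i)]
    (P : ∀ i, Measure (S i)) [∀ i, IsProbabilityMeasure (P i)]
    (A B : Set (∀ i, S i)) :
    Measure.pi P (boxOp A B) ≤ Measure.pi P A * Measure.pi P B := by
  classical
  let w : ∀ i, S i → ENNReal := fun i s => P i {s}
  have hw : ∀ E : Set (∀ i, S i),
      Measure.pi P E = ∑ x, (∏ i, w i (x i)) * (if x ∈ E then 1 else 0) := by
    intro E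
    have h1 := MeasureTheory.sum_measure_singleton (μ := Measure.pi P) (s := E.toFinset)
    rw [Set.coe_toFinset] at h1
    rw [← h1]
    simp_rw [Measure.pi_singleton, mul_ite, mul_one, mul_zero]
    rw [← Finset.sum_filter]
    refine Finset.sum_congr ?_ fun _ _ => rfl
    ext x; simp
  have h1 : ∀ E F : Set (∀ i, S i), Measure.pi P E * Measure.pi P F =
      ∑ p : (∀ i, S i) × (∀ i, S i), (∏ i, w i (p.1 i)) * (∏ i, w i (p.2 i)) *
      (if p.1 ∈ E ∧ p.2 ∈ F then 1 else 0) := by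
    intro E F
    rw [hw E, hw F, Finset.sum_mul_sum, Fintype.sum_prod_type]
    refine Finset.sum_congr rfl fun x _ => Finset.sum_congr rfl fun y _ => ?_
    by_cases hx : x ∈ E <;> by_cases hy : y ∈ F <;> simp [hx, hy]
  have h2 := BKRProof.weighted w A B
  rw [h1 A B]
  refine le_trans (le_of_eq ?_) h2
  have h3 := h1 (boxOp A B) Set.univ
  rw [measure_univ, mul_one] at h3
  rw [h3]
  simp
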